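/- arXiv:1408.6176 — 2 statements merged into one kernel-verified Lean document; each statement's English description precedes it below -/
import Mathlib

section
/- Let $n \ge 1$, let $v^1,\dots,v^p \in \mathbb{R}^n$, and let $$P := \bigl\{x \in \mathbb{R}^n : \text{there is } \lambda \in \mathbb{R}^p \text{ with } x_k = \max_{1 \le r \le p} (\lambda_r + v^r_k) \text{ for all } k \in \{1,\dots,n\}\bigr\}$$ be the tropical polytope generated by $v^1,\dots,v^p$. Let $v \in \mathbb{R}^n$. Call $v$ an *extreme point* of $P$ if $v \in P$ and, for all $x, y \in P$ such that $v$ is the coordinatewise maximum of $x$ and $y$, one has $v = x$ or $v = y$. For $i \in \{1,\dots,n\}$, let $S(v,i) := \{x \in \mathbb{R}^n : x_i - v_i \ge x_j - v_j \text{ for all } j \in \{1,\dots,n\}\}$, and call $v$ an *extreme point of $P$ of type $i$* if $v \in P$ and every $x \in P \cap S(v,i)$ is of the form $x = v + c\,(1,\dots,1)$ for some $c \in \mathbb{R}$. Then the following are equivalent: 1. $v$ is an extreme point of $P$; 2. there exists $i \in \{1,\dots,n\}$ such that $v$ is an extreme point of $P$ of type $i$; 3. there exists $i \in \{1,\dots,n\}$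 such that $v$ is a minimal element, with respect to the coordinatewise order $\le$ on $\mathbb{R}^n$, of the set $\{z \in P : z_i = v_i\}$ (in particular, $v$ belongs to this set). Moreover, for each $i \in \{1,\dots,n\}$, $v$ is an extreme point of $P$ of type $i$ if and only if $v$ is a minimal element of $\{z \in P : z_i = v_i\}$. -/
/-- The sector `S(a,i) = {x | x_i - a_i ≥ x_j - a_j for all j}`. -/
def sector {n : ℕ} (a : Fin n → ℝ) (i : Fin n) : Set (Fin n → ℝ) :=
  {x | ∀ j, x j - a j ≤ x i - a i}

/-- The tropical polytope generated by the points `vs 0, …, vs (p-1)`: the set of all `x` such that,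
for some real scalars `l r`, each coordinate `x i` is the maximum over `r` of `l r + vs r i`.
It is a subset of `ℝ^n` invariant under adding real multiples of `(1,…,1)`. -/
def tropPoly {n p : ℕ} (vs : Fin p → Fin n → ℝ) : Set (Fin n → ℝ) :=
  {x | ∃ l : Fin p → ℝ, ∀ i, IsGreatest (Set.range fun r => l r + vs r i) (x i)}

/-- `v` is an extreme point of `P`: it belongs to `P`, and it is not the coordinatewise maximum of
two points of `P` both different from `v`. -/
def IsExtremePt {n : ℕ} (P : Set (Fin n → ℝ)) (v : Fin n → ℝ) : Prop :=
  v ∈ P ∧ ∀ x ∈ P, ∀ y ∈ P, (∀ k, v k = max (x k) (y k)) → v = x ∨ v = y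

/-- `v` is an extreme point of `P` of type `i`: up to adding multiples of `(1,…,1)`, it is the only
point of `P` contained in the sector `S(v,i)`. -/
def ExtremeOfType {n : ℕ} (P : Set (Fin n → ℝ)) (v : Fin n → ℝ) (i : Fin n) : Prop :=
  v ∈ P ∧ ∀ x ∈ P ∩ sector v i, ∃ c : ℝ, ∀ k, x k = v k + c

theorem sup_mem_tropPoly {n p : ℕ} {vs : Fin p → Fin n → ℝ} {x y : Fin n → ℝ}
    (hx : x ∈ tropPoly vs) (hy : y ∈ tropPoly vs) : x ⊔ y ∈ tropPoly vs := by
  obtain ⟨l, hl⟩ := hx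
  obtain ⟨m, hm⟩ := hy
  refine ⟨l ⊔ m, fun k => ⟨?_, ?_⟩⟩
  · obtain ⟨⟨r, hr⟩, hxk⟩ := hl k
    obtain ⟨⟨s, hs⟩, hyk⟩ := hm k
    have h1 : m r + vs r k ≤ y k := hyk ⟨r, rfl⟩
    have h2 : l s + vs s k ≤ x k := hxk ⟨s, rfl⟩
    dsimp only at hr hs
    rcases le_total (y k) (x k) with h | h
    · refine ⟨r, ?_⟩
      simp only [Pi.sup_apply]
      rw [sup_eq_left.2 h, sup_eq_left.2 (by linarith), hr]
    · refine ⟨s, ?_⟩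
      simp only [Pi.sup_apply]
      rw [sup_eq_right.2 h, sup_eq_right.2 (by linarith), hs]
  · rintro _ ⟨r, rfl⟩
    simp only [Pi.sup_apply]
    rw [max_add]
    exact max_le_max ((hl k).2 ⟨r, rfl⟩) ((hm k).2 ⟨r, rfl⟩)

theorem add_const_mem_tropPoly {n p : ℕ} {vs : Fin p → Fin n → ℝ} {x : Fin n → ℝ}
    (hx : x ∈ tropPoly vs) (c : ℝ) : (fun k => x k + c) ∈ tropPoly vs := by
  obtain ⟨l, hl⟩ := hx
  refine ⟨fun r => l r + c, fun k => ⟨?_, ?_⟩⟩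
  · obtain ⟨⟨r, hr⟩, -⟩ := hl k
    dsimp only at hr
    exact ⟨r, by dsimp only; linarith⟩
  · rintro _ ⟨r, rfl⟩
    have h : l r + vs r k ≤ x k := (hl k).2 ⟨r, rfl⟩
    dsimp only
    linarith

theorem extremeOfType_iff_minimal {n : ℕ} {P : Set (Fin n → ℝ)}
    (hP : ∀ x ∈ P, ∀ c : ℝ, (fun k => x k + c) ∈ P) (v : Fin n → ℝ) (i : Fin n) :
    ExtremeOfType P v i ↔ Minimal (· ∈ {z | z ∈ P ∧ z i = v i}) v := by
  constructor
  · rintro ⟨hv, h⟩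
    refine ⟨⟨hv, rfl⟩, ?_⟩
    rintro z ⟨hz, hzi⟩ hzv k
    obtain ⟨c, hc⟩ := h z ⟨hz, fun j => by linarith [hzv j]⟩
    linarith [hc i, hc k]
  · rintro ⟨⟨hv, -⟩, h⟩
    refine ⟨hv, fun x hx => ⟨x i - v i, fun k => ?_⟩⟩
    have hxk : x k - v k ≤ x i - v i := hx.2 k
    have hle : v k ≤ x k + (v i - x i) :=
      h (y := fun k => x k + (v i - x i)) ⟨hP x hx.1 _, by ring⟩
        (fun j => by have : x j - v j ≤ x i - v i := hx.2 j
                     dsimp only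
                     linarith) k
    linarith

theorem IsExtremePt.of_minimal {n : ℕ} {P : Set (Fin n → ℝ)} {v : Fin n → ℝ} {i : Fin n}
    (h : Minimal (· ∈ {z | z ∈ P ∧ z i = v i}) v) : IsExtremePt P v := by
  refine ⟨h.1.1, fun x hx y hy hv => ?_⟩
  have hxv : x ≤ v := fun k => (hv k).symm ▸ le_max_left _ _
  have hyv : y ≤ v := fun k => (hv k).symm ▸ le_max_right _ _
  rcases max_choice (x i) (y i) with hi | hi
  · exact .inl (le_antisymm (h.2 ⟨hx, ((hv i).trans hi).symm⟩ hxv) hxv)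
  · exact .inr (le_antisymm (h.2 ⟨hy, ((hv i).trans hi).symm⟩ hyv) hyv)

/-- If `v` were minimal in no fiber `{z ∈ P | z i = v i}`, it would be the finite supremum of
points of `P` all different from `v`. -/
theorem IsExtremePt.exists_minimal {n : ℕ} (hn : 1 ≤ n) {P : Set (Fin n → ℝ)}
    (hP : ∀ x ∈ P, ∀ y ∈ P, x ⊔ y ∈ P) {v : Fin n → ℝ} (hv : IsExtremePt P v) :
    ∃ i : Fin n, Minimal (· ∈ {z | z ∈ P ∧ z i = v i}) v := by
  by_contra! hmin
  have hex : ∀ i, ∃ z ∈ P, z i = v i ∧ z ≤ v ∧ z ≠ v := fun i => by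
    by_contra! hz
    exact hmin i ⟨⟨hv.1, rfl⟩, fun z hzP hzv => (hz z hzP.1 hzP.2 hzv).ge⟩
  choose z hzP hzi hzv hne using hex
  have hs : (Finset.univ : Finset (Fin n)).Nonempty := ⟨⟨0, hn⟩, Finset.mem_univ _⟩
  have hsup : Finset.univ.sup' hs z ∈ P ∧ Finset.univ.sup' hs z ≠ v := by
    refine Finset.sup'_induction hs z (p := fun x => x ∈ P ∧ x ≠ v) ?_
      fun i _ => ⟨hzP i, hne i⟩
    rintro a ⟨ha, hav⟩ b ⟨hb, hbv⟩
    refine ⟨hP a ha b hb, fun hab => ?_⟩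
    rcases hv.2 a ha b hb (fun k => (congrFun hab k).symm) with h | h
    · exact hav h.symm
    · exact hbv h.symm
  refine hsup.2 (le_antisymm (Finset.sup'_le hs z fun i _ => hzv i) fun i => ?_)
  exact (hzi i).ge.trans (Finset.le_sup' z (Finset.mem_univ i) i)

/-- Characterization of the extreme points of a tropical polytope. `Minimal (· ∈ S) v` says that
`v ∈ S` and that `v` is minimal in `S` for the (coordinatewise) order. -/
theorem isExtremePt_iff_type_iff_minimal {n p : ℕ} (hn : 1 ≤ n) (vs : Fin p → Fin n → ℝ)
    (v : Fin n → ℝ) :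
    [IsExtremePt (tropPoly vs) v,
      ∃ i : Fin n, ExtremeOfType (tropPoly vs) v i,
      ∃ i : Fin n, Minimal (· ∈ {z | z ∈ tropPoly vs ∧ z i = v i}) v].TFAE ∧
    ∀ i : Fin n, ExtremeOfType (tropPoly vs) v i ↔
      Minimal (· ∈ {z | z ∈ tropPoly vs ∧ z i = v i}) v := by
  have htype := extremeOfType_iff_minimal
    (fun x (hx : x ∈ tropPoly vs) c => add_const_mem_tropPoly hx c) v
  refine ⟨?_, htype⟩
  tfae_have 1 → 3 := fun h => h.exists_minimal hn fun x hx y hy => sup_mem_tropPoly hx hy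
  tfae_have 3 → 1 := fun ⟨_, h⟩ => .of_minimal h
  tfae_have 2 ↔ 3 := exists_congr htype
  tfae_finish
end

section
/- Let $n\ge 1$. For $a\in\mathbb{R}^n$, the tropical hyperplane with apex $a$ is the set of all $x\in\mathbb{R}^n$ such that the maximum $\max_{1\le i\le n}(x_i-a_i)$ is attained for at least two indices $i$. An $n\times n$ real matrix $U$ is tropically singular if the maximum of $\sum_{i=1}^n U_{i\sigma(i)}$ over all permutations $\sigma$ of $\{1,\dots,n\}$ is attained by at least two permutations. Then points $u^1,\dots,u^n\in\mathbb{R}^n$ are all contained in a common tropical hyperplane (that is, there is $a\in\mathbb{R}^n$ such that the tropical hyperplane with apex $a$ contains every $u^j$) if and only if the $n\times n$ matrix $U$ with entries $U_{ij}:=u^j_i$ (whose columns are $u^1,\dots,u^n$) is tropically singular. -/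
/-- An `m × m` real matrix is tropically singular if the maximum over permutations `σ` of
`∑ i, U i (σ i)` is attained by at least two permutations. -/
def TropSingular {m : ℕ} (U : Matrix (Fin m) (Fin m) ℝ) : Prop :=
  ∃ σ τ : Equiv.Perm (Fin m), σ ≠ τ ∧
    (∑ i, U i (σ i)) = (∑ i, U i (τ i)) ∧
    ∀ ρ : Equiv.Perm (Fin m), (∑ i, U i (ρ i)) ≤ (∑ i, U i (σ i))

/-- The tropical hyperplane with apex `a`: the points where `max_j (x_j - a_j)` is attained
at least twice. -/
def TropHyperplane {n : ℕ} (a : Fin n → ℝ) : Set (Fin n → ℝ) :=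
  {x | ∃ i k : Fin n, i ≠ k ∧ x i - a i = x k - a k ∧ ∀ j, x j - a j ≤ x i - a i}

/-- Tropical singularity of the matrix with columns `u j`, expressed through the assignments
`j ↦ π j` of a row to each column. -/
theorem tropSingular_of_iff_columns {n : ℕ} (u : Fin n → Fin n → ℝ) :
    TropSingular (Matrix.of fun i j : Fin n => u j i) ↔
      ∃ π τ : Equiv.Perm (Fin n), π ≠ τ ∧ ∑ j, u j (π j) = ∑ j, u j (τ j) ∧
        ∀ ρ : Equiv.Perm (Fin n), ∑ j, u j (ρ j) ≤ ∑ j, u j (π j) := by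
  have key (σ : Equiv.Perm (Fin n)) : ∑ i, u (σ i) i = ∑ j, u j (σ⁻¹ j) := by
    rw [← Equiv.sum_comp σ fun j => u j (σ⁻¹ j)]
    simp
  simp only [TropSingular, Matrix.of_apply, key]
  constructor
  · rintro ⟨σ, τ, hne, heq, hmax⟩
    exact ⟨σ⁻¹, τ⁻¹, inv_injective.ne hne, heq, fun ρ => by simpa using hmax ρ⁻¹⟩
  · rintro ⟨σ, τ, hne, heq, hmax⟩
    exact ⟨σ⁻¹, τ⁻¹, inv_injective.ne hne, by simpa using heq, fun ρ => by simpa using hmax ρ⁻¹⟩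

/-- A fixed-point-free self-map of a nonempty finite type agrees, on a nonempty set, with a
permutation that is the identity elsewhere. -/
theorem exists_perm_ne_one_of_forall_ne {α : Type*} [Finite α] [Nonempty α] (g : α → α)
    (hg : ∀ x, g x ≠ x) : ∃ h : Equiv.Perm α, h ≠ 1 ∧ ∀ x, h x = g x ∨ h x = x := by
  classical
  have hbij := Function.bijOn_periodicPts g
  set S := Function.periodicPts g
  obtain ⟨y, hy⟩ : S.Nonempty := by
    obtain ⟨x⟩ := ‹Nonempty α›
    obtain ⟨p, q, hpq, heq⟩ := Finite.exists_ne_map_eq_of_infinite fun k : ℕ => g^[k] x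
    wlog hlt : p < q generalizing p q
    · exact this q p hpq.symm heq.symm (by omega)
    refine ⟨g^[p] x, q - p, by omega, ?_⟩
    rw [Function.IsPeriodicPt, Function.IsFixedPt, ← Function.iterate_add_apply,
      Nat.sub_add_cancel hlt.le]
    exact heq.symm
  have hinj : Function.Injective fun x => if x ∈ S then g x else x := by
    intro x z hxz
    by_cases hx : x ∈ S <;> by_cases hz : z ∈ S <;> simp only [hx, hz, if_true, if_false] at hxz
    · exact hbij.injOn hx hz hxz
    · exact absurd (hxz ▸ hbij.mapsTo hx) hz
    · exact absurd (hxz ▸ hbij.mapsTo hz) hx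
    · exact hxz
  refine ⟨Equiv.ofBijective _ (Finite.injective_iff_bijective.mp hinj), fun h1 => ?_, fun x => ?_⟩
  · have := DFunLike.congr_fun h1 y
    simp only [Equiv.ofBijective_apply, hy, if_true, Equiv.Perm.one_apply] at this
    exact hg y this
  · by_cases hx : x ∈ S <;> simp [hx]

theorem tropSingular_of_mem_tropHyperplane {n : ℕ} (hn : 1 ≤ n) (u : Fin n → Fin n → ℝ)
    (a : Fin n → ℝ) (ha : ∀ j, u j ∈ TropHyperplane a) :
    TropSingular (Matrix.of fun i j : Fin n => u j i) := by
  have : Nonempty (Fin n) := ⟨⟨0, hn⟩⟩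
  rw [tropSingular_of_iff_columns]
  obtain ⟨π, hπ⟩ := Finite.exists_max fun π : Equiv.Perm (Fin n) => ∑ j, u j (π j)
  have hf (j) : ∃ i, i ≠ π j ∧ ∀ k, u j k - a k ≤ u j i - a i := by
    obtain ⟨i, k, hik, heq, hmax⟩ := ha j
    by_cases hi : i = π j
    · exact ⟨k, fun hk => hik (hi.trans hk.symm), fun l => heq ▸ hmax l⟩
    · exact ⟨i, hi, hmax⟩
  choose f hfne hfmax using hf
  obtain ⟨h, hne, hh⟩ := exists_perm_ne_one_of_forall_ne (fun j => π⁻¹ (f j)) fun j hj =>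
    hfne j (Equiv.Perm.inv_eq_iff_eq.mp hj)
  refine ⟨π, π * h, fun h' => hne (by simpa using h'.symm), ?_, hπ⟩
  refine le_antisymm ?_ (hπ _)
  have hle : ∑ j, (u j (π j) - a (π j)) ≤ ∑ j, (u j ((π * h) j) - a ((π * h) j)) := by
    refine Finset.sum_le_sum fun j _ => ?_
    rcases hh j with hj | hj
    · simpa [hj] using hfmax j (π j)
    · simp [hj]
  rwa [Finset.sum_sub_distrib, Finset.sum_sub_distrib, Equiv.sum_comp π a,
    Equiv.sum_comp (π * h) a, sub_le_sub_iff_right] at hle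

/-- The tropical cofactors along column `v`: the `i`-th one is the maximal weight of an assignment
of the rows other than `i` to the columns other than `v`. -/
theorem exists_tropCofactor {n : ℕ} (u : Fin n → Fin n → ℝ) (v : Fin n) :
    ∃ A : Fin n → ℝ,
      (∀ π : Equiv.Perm (Fin n), ∑ k ∈ Finset.univ.erase v, u k (π k) ≤ A (π v)) ∧
      ∀ i, ∃ π : Equiv.Perm (Fin n), π v = i ∧ A i = ∑ k ∈ Finset.univ.erase v, u k (π k) := by
  have hmax (i : Fin n) : ∃ π : Equiv.Perm (Fin n), π v = i ∧ ∀ ρ : Equiv.Perm (Fin n), ρ v = i →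
      ∑ k ∈ Finset.univ.erase v, u k (ρ k) ≤ ∑ k ∈ Finset.univ.erase v, u k (π k) := by
    have : Nonempty {π : Equiv.Perm (Fin n) // π v = i} := ⟨Equiv.swap v i, by simp⟩
    obtain ⟨π, hπ⟩ := Finite.exists_max fun π : {π : Equiv.Perm (Fin n) // π v = i} =>
      ∑ k ∈ Finset.univ.erase v, u k (π.1 k)
    exact ⟨π.1, π.2, fun ρ hρ => hπ ⟨ρ, hρ⟩⟩
  choose P hP hPmax using hmax
  exact ⟨fun i => ∑ k ∈ Finset.univ.erase v, u k (P i k), fun π => hPmax _ π rfl,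
    fun i => ⟨P i, hP i, rfl⟩⟩

/-- If, after replacing column `v` by `x`, two optimal assignments differ at `v`, then `x` lies in
the tropical hyperplane whose apex is the negated vector of cofactors along `v`. -/
theorem mem_tropHyperplane_of_optimal {n : ℕ} {u : Fin n → Fin n → ℝ} {v : Fin n} {A : Fin n → ℝ}
    (hle : ∀ π : Equiv.Perm (Fin n), ∑ k ∈ Finset.univ.erase v, u k (π k) ≤ A (π v))
    (hA : ∀ i, ∃ π : Equiv.Perm (Fin n),
      π v = i ∧ A i = ∑ k ∈ Finset.univ.erase v, u k (π k))
    {x : Fin n → ℝ} {π τ : Equiv.Perm (Fin n)} (hne : π v ≠ τ v)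
    (heq : x (π v) + ∑ k ∈ Finset.univ.erase v, u k (π k) =
      x (τ v) + ∑ k ∈ Finset.univ.erase v, u k (τ k))
    (hmax : ∀ ρ : Equiv.Perm (Fin n), x (ρ v) + ∑ k ∈ Finset.univ.erase v, u k (ρ k) ≤
      x (π v) + ∑ k ∈ Finset.univ.erase v, u k (π k)) :
    x ∈ TropHyperplane (-A) := by
  have hub (i) : x i + A i ≤ x (π v) + ∑ k ∈ Finset.univ.erase v, u k (π k) := by
    obtain ⟨ρ, rfl, hρ⟩ := hA i
    exact hρ ▸ hmax ρ
  have hπ := hle π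
  have hτ := hle τ
  have hπ' := hub (π v)
  have hτ' := hub (τ v)
  refine ⟨π v, τ v, hne, ?_, fun j => ?_⟩
  · simp only [Pi.neg_apply]
    linarith
  · have := hub j
    simp only [Pi.neg_apply]
    linarith

theorem exists_mem_tropHyperplane_of_tropSingular {n : ℕ} (u : Fin n → Fin n → ℝ)
    (h : TropSingular (Matrix.of fun i j : Fin n => u j i)) :
    ∃ a : Fin n → ℝ, ∀ j, u j ∈ TropHyperplane a := by
  rw [tropSingular_of_iff_columns] at h
  obtain ⟨π, τ, hne, heq, hmax⟩ := h
  obtain ⟨v, hv⟩ : ∃ v, π v ≠ τ v := by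
    by_contra! h
    exact hne (Equiv.ext h)
  obtain ⟨A, hle, hA⟩ := exists_tropCofactor u v
  refine ⟨-A, fun j => ?_⟩
  have hsplit (ρ : Equiv.Perm (Fin n)) :
      u v (ρ v) + ∑ k ∈ Finset.univ.erase v, u k (ρ k) = ∑ k, u k (ρ k) :=
    Finset.add_sum_erase _ (fun k => u k (ρ k)) (Finset.mem_univ v)
  by_cases hj : j = v
  · subst hj
    refine mem_tropHyperplane_of_optimal hle hA hv ?_ fun ρ => ?_
    · rw [hsplit, hsplit, heq]
    · rw [hsplit, hsplit]
      exact hmax ρ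
  · obtain ⟨ρ, hρ⟩ := Finite.exists_max fun ρ : Equiv.Perm (Fin n) =>
      u j (ρ v) + ∑ k ∈ Finset.univ.erase v, u k (ρ k)
    refine mem_tropHyperplane_of_optimal hle hA (π := ρ) (τ := ρ * Equiv.swap v j)
      (by simpa using Ne.symm hj) ?_ hρ
    have hmem : j ∈ Finset.univ.erase v := by simpa using hj
    rw [← Finset.add_sum_erase _ (fun k => u k (ρ k)) hmem,
      ← Finset.add_sum_erase _ (fun k => u k ((ρ * Equiv.swap v j) k)) hmem]
    have hrest : ∑ k ∈ (Finset.univ.erase v).erase j, u k ((ρ * Equiv.swap v j) k) =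
        ∑ k ∈ (Finset.univ.erase v).erase j, u k (ρ k) := by
      refine Finset.sum_congr rfl fun k hk => ?_
      simp only [Finset.mem_erase, Finset.mem_univ, and_true] at hk
      rw [Equiv.Perm.mul_apply, Equiv.swap_apply_of_ne_of_ne hk.2 hk.1]
    rw [hrest]
    simp only [Equiv.Perm.mul_apply, Equiv.swap_apply_left, Equiv.swap_apply_right]
    ring

/-- For `n ≥ 1`, the points `u 0, …, u (n-1)` of `ℝ^n` lie in a common tropical hyperplane
iff the `n × n` matrix whose columns are these points is tropically singular. -/
theorem mem_tropHyperplane_iff_tropSingular {n : ℕ} (hn : 1 ≤ n) (u : Fin n → Fin n → ℝ) :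
    (∃ a : Fin n → ℝ, ∀ j : Fin n, u j ∈ TropHyperplane a) ↔
      TropSingular (Matrix.of fun i j : Fin n => u j i) :=
  ⟨fun ⟨a, ha⟩ => tropSingular_of_mem_tropHyperplane hn u a ha,
    exists_mem_tropHyperplane_of_tropSingular u⟩
end
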